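/- Fix σ > 0, a nonempty index set I ⊆ {1, …, N} with |I| = p, and for t ≠ 0 take the test points v_i = t e_i for i ∈ I, where e_i is the i-th standard basis vector of ℝ^N. Let V_t ∈ ℝ^{N×p} be the matrix with columns (v_i)_{i ∈ I} and let J_t ∈ ℝ^{p×p} have entries (J_t)_{ij} = exp(v_iᵀ v_j / σ²) − 1. Then J_t is diagonal and invertible with Tr(V_t J_t⁻¹ V_tᵀ) = p · t² / (exp(t²/σ²) − 1), and this quantity converges to p σ² as t → 0 (so the Cramér–Rao bound is recovered as a limit of Hammersley–Chapman–Robbins bounds). -/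

import Mathlib

open MeasureTheory ProbabilityTheory Filter
open scoped ENNReal Classical

/-- The matrix `V_t` whose columns are the test points `v_i = t e_i`, `i ∈ I`. -/
noncomputable def Vmat (N : ℕ) (I : Finset (Fin N)) (t : ℝ) : Matrix (Fin N) I ℝ :=
  Matrix.of fun n i => if (i : Fin N) = n then t else 0

/-- The matrix `J_t` with entries `(J_t)_{ij} = exp(v_iᵀ v_j / σ²) − 1`. -/
noncomputable def Jmat (N : ℕ) (I : Finset (Fin N)) (σ t : ℝ) : Matrix I I ℝ :=
  Matrix.of fun i j =>
    Real.exp ((∑ n, Vmat N I t n i * Vmat N I t n j) / σ ^ 2) - 1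

/-! The columns of `V_t` are orthogonal of squared length `t²`, so the Gram matrix `V_tᵀ V_t` is
`t² • 1`. The function `x ↦ exp (x / σ²) - 1` vanishes at `0`, so applying it entrywise keeps the
matrix diagonal, and cyclicity of the trace reduces `Tr (V_t J_t⁻¹ V_tᵀ)` to the diagonal of the
Gram matrix. The limit is `p` times the reciprocal of the derivative of `x ↦ exp (x / σ²)` at `0`,
approached along `x = t²`. -/

section

open Matrix
open scoped Topology

section DiagonalInverse

variable {m n K : Type*} [Fintype n] [DecidableEq n] [Field K]

theorem inv_diagonal_of_forall_ne_zero {d : n → K} (hd : ∀ i, d i ≠ 0) :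
    (diagonal d)⁻¹ = diagonal d⁻¹ :=
  inv_eq_right_inv <| by simp [diagonal_mul_diagonal, hd]

theorem trace_mul_inv_diagonal_mul [Fintype m] {d : n → K} (hd : ∀ i, d i ≠ 0)
    (A : Matrix m n K) (B : Matrix n m K) :
    trace (A * (diagonal d)⁻¹ * B) = ∑ i, (B * A) i i / d i := by
  rw [trace_mul_cycle, inv_diagonal_of_forall_ne_zero hd]
  simp [trace, mul_diagonal, div_eq_mul_inv]

end DiagonalInverse

theorem tendsto_pow_nhdsNE_zero {M : Type*} [MonoidWithZero M] [NoZeroDivisors M]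
    [TopologicalSpace M] [ContinuousMul M] {k : ℕ} (hk : k ≠ 0) :
    Tendsto (fun x : M => x ^ k) (𝓝[≠] 0) (𝓝[≠] 0) := by
  have hmaps : Set.MapsTo (fun x : M => x ^ k) {0}ᶜ {0}ᶜ := fun _ hx => pow_ne_zero k hx
  simpa [hk] using
    (continuous_pow (M := M) k).continuousWithinAt.tendsto_nhdsWithin (x := 0) hmaps

theorem tendsto_div_exp_div_sub_one {s : ℝ} (hs : s ≠ 0) :
    Tendsto (fun x : ℝ => x / (Real.exp (x / s) - 1)) (𝓝[≠] 0) (𝓝 s) := by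
  have hderiv : HasDerivAt (fun x : ℝ => Real.exp (x / s)) s⁻¹ 0 := by
    simpa using ((hasDerivAt_id (0 : ℝ)).div_const s).exp
  simpa [slope_fun_def_field] using (hasDerivAt_iff_tendsto_slope.mp hderiv).inv₀ (inv_ne_zero hs)

theorem exp_sq_div_sq_sub_one_ne_zero {σ t : ℝ} (hσ : σ ≠ 0) (ht : t ≠ 0) :
    Real.exp (t ^ 2 / σ ^ 2) - 1 ≠ 0 := by
  simp [sub_eq_zero, hσ, ht]

section TestPoints

variable (N : ℕ) (I : Finset (Fin N))

theorem vmat_transpose_mul_self (t : ℝ) :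
    (Vmat N I t)ᵀ * Vmat N I t = diagonal fun _ => t ^ 2 := by
  ext i j
  rcases eq_or_ne i j with rfl | hij
  · simp [Vmat, mul_apply, sq]
  · simp [Vmat, mul_apply, hij]

theorem jmat_eq_map_vmat_transpose_mul_self (σ t : ℝ) :
    Jmat N I σ t = ((Vmat N I t)ᵀ * Vmat N I t).map fun x => Real.exp (x / σ ^ 2) - 1 :=
  rfl

theorem jmat_eq_diagonal (σ t : ℝ) :
    Jmat N I σ t = diagonal fun _ => Real.exp (t ^ 2 / σ ^ 2) - 1 := by
  rw [jmat_eq_map_vmat_transpose_mul_self, vmat_transpose_mul_self, diagonal_map (by simp)]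

theorem isDiag_jmat (σ t : ℝ) : (Jmat N I σ t).IsDiag :=
  jmat_eq_diagonal N I σ t ▸ isDiag_diagonal _

variable {σ t : ℝ}

theorem isUnit_jmat (hσ : σ ≠ 0) (ht : t ≠ 0) : IsUnit (Jmat N I σ t) := by
  rw [jmat_eq_diagonal, isUnit_diagonal, Pi.isUnit_iff]
  exact fun _ => (exp_sq_div_sq_sub_one_ne_zero hσ ht).isUnit

theorem trace_vmat_mul_inv_jmat_mul_transpose (hσ : σ ≠ 0) (ht : t ≠ 0) :
    trace (Vmat N I t * (Jmat N I σ t)⁻¹ * (Vmat N I t)ᵀ)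
      = I.card * (t ^ 2 / (Real.exp (t ^ 2 / σ ^ 2) - 1)) := by
  rw [jmat_eq_diagonal,
    trace_mul_inv_diagonal_mul fun _ => exp_sq_div_sq_sub_one_ne_zero hσ ht,
    vmat_transpose_mul_self]
  simp

theorem tendsto_trace_vmat_mul_inv_jmat_mul_transpose (hσ : σ ≠ 0) :
    Tendsto (fun t => trace (Vmat N I t * (Jmat N I σ t)⁻¹ * (Vmat N I t)ᵀ))
      (𝓝[≠] 0) (𝓝 (I.card * σ ^ 2)) := by
  have hlim : Tendsto (fun t : ℝ => t ^ 2 / (Real.exp (t ^ 2 / σ ^ 2) - 1)) (𝓝[≠] 0) (𝓝 (σ ^ 2)) :=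
    (tendsto_div_exp_div_sub_one (pow_ne_zero 2 hσ)).comp (tendsto_pow_nhdsNE_zero two_ne_zero)
  refine (hlim.const_mul (I.card : ℝ)).congr' ?_
  filter_upwards [self_mem_nhdsWithin] with t ht
  exact (trace_vmat_mul_inv_jmat_mul_transpose N I hσ ht).symm

end TestPoints

end

/-- For test points `v_i = t e_i` (`i ∈ I`, `t ≠ 0`), `J_t` is diagonal and invertible with
`Tr(V_t J_t⁻¹ V_tᵀ) = p t² / (exp(t²/σ²) − 1)`, and this quantity converges to `p σ²` as
`t → 0`: the Cramér–Rao bound is recovered as a limit of HCR bounds. -/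
theorem stmt_16 (N : ℕ) (hN : 1 ≤ N) (σ : ℝ) (hσ : 0 < σ)
    (I : Finset (Fin N)) (hI : I.Nonempty) (p : ℕ) (hp : I.card = p) :
    (∀ t : ℝ, t ≠ 0 →
      (Jmat N I σ t).IsDiag ∧ IsUnit (Jmat N I σ t) ∧
      Matrix.trace (Vmat N I t * (Jmat N I σ t)⁻¹ * (Vmat N I t).transpose)
        = (p : ℝ) * t ^ 2 / (Real.exp (t ^ 2 / σ ^ 2) - 1)) ∧
    Filter.Tendsto
      (fun t : ℝ =>
        Matrix.trace (Vmat N I t * (Jmat N I σ t)⁻¹ * (Vmat N I t).transpose))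
      (nhdsWithin 0 {(0 : ℝ)}ᶜ) (nhds ((p : ℝ) * σ ^ 2)) := by
  subst hp
  refine ⟨fun t ht => ⟨isDiag_jmat N I σ t, isUnit_jmat N I hσ.ne' ht, ?_⟩,
    tendsto_trace_vmat_mul_inv_jmat_mul_transpose N I hσ.ne'⟩
  rw [trace_vmat_mul_inv_jmat_mul_transpose N I hσ.ne' ht, mul_div_assoc]
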